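/- Let P ∈ ℝ^{n×n} be an orthogonal projector with trace(P) = r, let W ∈ ℝ^{n×n} be positive semidefinite, let γ ≥ 0, and set α = P + 2γ PWP. If B ∈ ℝ^{n×n} satisfies the Penrose conditions for α, then ‖P − B‖_F ≤ 2γ √r ‖PWP‖_F. -/

import Mathlib

/-!
Write `S = 2γ PWP`, which is positive semidefinite, so that `α = P + S`. If `α X = 0`, then
`0 = tr (Xᵀ α X) = ‖P X‖² + tr (Xᵀ S X)` forces `P X = 0`. Applied to `X = 1 - B α` and
`X = 1 - α B`, this shows `B α = α B = P`, whence `P B = B = B P` and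
`P - B = B α - B P = B S`. By submultiplicativity of the Frobenius norm it remains to see
`‖B‖² ≤ r`, which follows from `P = α B = B + S B` by expanding
`r = tr (Pᵀ P) = ‖B‖² + 2 tr (Bᵀ S B) + ‖S B‖²`.
-/

open Matrix BigOperators

/-- The Frobenius norm of a square real matrix. -/
noncomputable def frobNorm {n : ℕ} (M : Matrix (Fin n) (Fin n) ℝ) : ℝ :=
  Real.sqrt (∑ i, ∑ j, M i j ^ 2)

section FrobeniusNorm

attribute [local instance] Matrix.frobeniusNormedAddCommGroup Matrix.frobeniusNormedSpace

theorem frobNorm_eq_norm {n : ℕ} (M : Matrix (Fin n) (Fin n) ℝ) : frobNorm M = ‖M‖ := by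
  rw [Matrix.frobenius_norm_def, ← Real.sqrt_eq_rpow, frobNorm]
  simp

theorem frobNorm_mul_le {n : ℕ} (M N : Matrix (Fin n) (Fin n) ℝ) :
    frobNorm (M * N) ≤ frobNorm M * frobNorm N := by
  simpa only [frobNorm_eq_norm] using Matrix.frobenius_norm_mul M N

theorem frobNorm_smul_of_nonneg {n : ℕ} {c : ℝ} (hc : 0 ≤ c) (M : Matrix (Fin n) (Fin n) ℝ) :
    frobNorm (c • M) = c * frobNorm M := by
  simp only [frobNorm_eq_norm, norm_smul, Real.norm_of_nonneg hc]

end FrobeniusNorm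

theorem trace_transpose_mul_self_nonneg {n : ℕ} (M : Matrix (Fin n) (Fin n) ℝ) :
    0 ≤ (Mᵀ * M).trace := by
  simpa using (Matrix.posSemidef_conjTranspose_mul_self M).trace_nonneg

theorem frobNorm_eq_sqrt_trace {n : ℕ} (M : Matrix (Fin n) (Fin n) ℝ) :
    frobNorm M = Real.sqrt (Mᵀ * M).trace := by
  rw [frobNorm, Finset.sum_comm]
  simp [Matrix.trace, Matrix.mul_apply, pow_two]

theorem trace_conj_nonneg {n : ℕ} {S : Matrix (Fin n) (Fin n) ℝ} (hS : S.PosSemidef)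
    (X : Matrix (Fin n) (Fin n) ℝ) : 0 ≤ (Xᵀ * S * X).trace := by
  simpa using (hS.conjTranspose_mul_mul_same X).trace_nonneg

/-- The kernel of `P + S` is contained in that of `P`, phrased for matrices `X` (acting
columnwise). -/
theorem proj_mul_eq_zero {n : ℕ} {P S X : Matrix (Fin n) (Fin n) ℝ}
    (hPsymm : Pᵀ = P) (hPidem : P * P = P) (hS : S.PosSemidef) (h : (P + S) * X = 0) :
    P * X = 0 := by
  have hexp : ((P * X)ᵀ * (P * X)).trace + (Xᵀ * S * X).trace = 0 := by
    have : (P * X)ᵀ * (P * X) + Xᵀ * S * X = Xᵀ * ((P + S) * X) := by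
      rw [transpose_mul, hPsymm, Matrix.mul_assoc, ← Matrix.mul_assoc P P X, hPidem]
      noncomm_ring
    rw [← trace_add, this, h, Matrix.mul_zero, trace_zero]
  have h0 : ((P * X)ᵀ * (P * X)).trace = 0 :=
    le_antisymm (by linarith [trace_conj_nonneg hS X]) (trace_transpose_mul_self_nonneg _)
  exact Matrix.trace_conjTranspose_mul_self_eq_zero_iff.mp (by simpa using h0)

/-- Let `P ∈ ℝ^{n×n}` be an orthogonal projector with
`trace(P) = r`, `W` positive semidefinite, `γ ≥ 0`, and `α = P + 2γ PWP`.
If `B` satisfies the Penrose conditions for `α`, then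
`‖P − B‖_F ≤ 2γ √r ‖PWP‖_F`. -/
theorem proj_sub_pinv_bound (n r : ℕ) (P W B : Matrix (Fin n) (Fin n) ℝ)
    (hPsymm : Pᵀ = P) (hPidem : P * P = P) (htr : P.trace = (r : ℝ))
    (hWsymm : Wᵀ = W) (hWpos : ∀ x : Fin n → ℝ, 0 ≤ x ⬝ᵥ (W *ᵥ x))
    (γ : ℝ) (hγ : 0 ≤ γ)
    (α : Matrix (Fin n) (Fin n) ℝ) (hα : α = P + (2 * γ) • (P * W * P))
    (h1 : α * B * α = α) (h2 : B * α * B = B)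
    (h3 : (α * B)ᵀ = α * B) (h4 : (B * α)ᵀ = B * α) :
    frobNorm (P - B) ≤ 2 * γ * Real.sqrt r * frobNorm (P * W * P) := by
  have hW : W.PosSemidef :=
    Matrix.PosSemidef.of_dotProduct_mulVec_nonneg (by simpa [IsHermitian] using hWsymm)
      (by simpa using hWpos)
  obtain ⟨S, hSdef⟩ : ∃ S, S = (2 * γ) • (P * W * P) := ⟨_, rfl⟩
  have hS : S.PosSemidef := by
    have := (hW.conjTranspose_mul_mul_same P).smul (show (0 : ℝ) ≤ 2 * γ by positivity)
    simpa [hSdef, hPsymm] using this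
  have hSsymm : Sᵀ = S := by simpa [IsHermitian] using hS.isHermitian
  have hSP : S * P = S := by
    rw [hSdef, Matrix.smul_mul, Matrix.mul_assoc (P * W), hPidem]
  have hPS : P * S = S := by
    rw [hSdef, Matrix.mul_smul, ← Matrix.mul_assoc, ← Matrix.mul_assoc, hPidem]
  rw [← hSdef] at hα
  have hαsymm : αᵀ = α := by rw [hα, transpose_add, hPsymm, hSsymm]
  have hαP : α * P = α := by rw [hα, Matrix.add_mul, hPidem, hSP]
  have hPα : P * α = α := by rw [hα, Matrix.mul_add, hPidem, hPS]
  have hBα : B * α = P := by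
    have hker : P * (1 - B * α) = 0 := by
      refine proj_mul_eq_zero hPsymm hPidem hS ?_
      rw [← hα, Matrix.mul_sub, Matrix.mul_one, ← Matrix.mul_assoc, h1, sub_self]
    have hP : P = P * (B * α) := by
      rwa [Matrix.mul_sub, Matrix.mul_one, sub_eq_zero] at hker
    have hPt := congrArg transpose hP
    rw [transpose_mul, h4, hPsymm, Matrix.mul_assoc, hαP] at hPt
    exact hPt.symm
  have hαB : α * B = P := by
    have hker : P * (1 - α * B) = 0 := by
      refine proj_mul_eq_zero hPsymm hPidem hS ?_
      have h1t := congrArg transpose h1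
      rw [transpose_mul, h3, hαsymm] at h1t
      rw [← hα, Matrix.mul_sub, Matrix.mul_one, h1t, sub_self]
    rw [Matrix.mul_sub, Matrix.mul_one, sub_eq_zero, ← Matrix.mul_assoc, hPα] at hker
    exact hker.symm
  have hPB : P * B = B := by rw [← hBα, h2]
  have hBP : B * P = B := by rw [← hαB, ← Matrix.mul_assoc, h2]
  have hdiff : P - B = B * S := by
    rw [← hBα, hα, Matrix.mul_add, hBP, add_sub_cancel_left]
  have hPexp : P = B + S * B := by
    rw [← hαB, hα, Matrix.add_mul, hPB]
  have hBr : (Bᵀ * B).trace ≤ r := by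
    have hexp : Bᵀ * B + Bᵀ * S * B + Bᵀ * S * B + (S * B)ᵀ * (S * B) = P := by
      calc _ = (B + S * B)ᵀ * (B + S * B) := by
            rw [transpose_add, transpose_mul, hSsymm]
            noncomm_ring
        _ = P := by rw [← hPexp, hPsymm, hPidem]
    have htrace := congrArg trace hexp
    rw [trace_add, trace_add, trace_add, htr] at htrace
    linarith [trace_conj_nonneg hS B, trace_transpose_mul_self_nonneg (S * B)]
  have hnonneg : 0 ≤ frobNorm S := Real.sqrt_nonneg _
  calc frobNorm (P - B) = frobNorm (B * S) := by rw [hdiff]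
    _ ≤ frobNorm B * frobNorm S := frobNorm_mul_le B S
    _ ≤ Real.sqrt r * frobNorm S := by
        gcongr
        rw [frobNorm_eq_sqrt_trace]
        exact Real.sqrt_le_sqrt hBr
    _ = 2 * γ * Real.sqrt r * frobNorm (P * W * P) := by
        rw [hSdef, frobNorm_smul_of_nonneg (by positivity)]
        ring
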